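/- Let T be the odd lattice ⟨1⟩ ⊕ U ⊕ E8(2) of rank 11 and signature (2,9), and let T₀ be its even sublattice, consisting of all vectors of even norm. Then every isometry of T maps T₀ onto T₀, and the restriction map O(T) → O(T₀), f ↦ f|_{T₀}, is a group isomorphism; in particular every isometry of T₀ extends uniquely to an isometry of T. -/

import Mathlib

/-!
The even sublattice `T₀` determines `T` intrinsically: `T = T₀ + 2 T₀^∨`, where `T₀^∨` is the dual
lattice. An isometry of `T₀` extends to `T₀^∨` and hence preserves this overlattice.

The identity holds for every 2-elementary lattice `T` with a characteristic vector `c` of odd norm.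
Then `T₀` is the set of vectors with even product with `c`, so that `T = T₀ + ℤ c` and `T₀^∨` is
generated by `T^∨` and `c / 2`, while `2 T^∨ ⊆ T`. To stay inside `T`, everything is multiplied
by 2: the claim becomes that `2 T` is generated by `2 T₀` and by the vectors of `T₀` whose products
with `T₀` are divisible by 4. For `T = ⟨1⟩ ⊕ U ⊕ E8(2)` the generator of `⟨1⟩` serves as `c`.
-/

open Matrix

/-- The hyperbolic plane `U`, with Gram matrix `[[0,1],[1,0]]`. -/
abbrev latU : Matrix (Fin 2) (Fin 2) ℤ := !![0, 1; 1, 0]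

/-- The negative definite even unimodular lattice `E₈` (negative of the Cartan matrix). -/
abbrev latE8 : Matrix (Fin 8) (Fin 8) ℤ :=
  !![-2,  0,  1,  0,  0,  0,  0,  0;
      0, -2,  0,  1,  0,  0,  0,  0;
      1,  0, -2,  1,  0,  0,  0,  0;
      0,  1,  1, -2,  1,  0,  0,  0;
      0,  0,  0,  1, -2,  1,  0,  0;
      0,  0,  0,  0,  1, -2,  1,  0;
      0,  0,  0,  0,  0,  1, -2,  1;
      0,  0,  0,  0,  0,  0,  1, -2]

/-- Orthogonal direct sum of two lattices (block-diagonal Gram matrix). -/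
def dsum {a b : ℕ} (A : Matrix (Fin a) (Fin a) ℤ) (B : Matrix (Fin b) (Fin b) ℤ) :
    Matrix (Fin (a + b)) (Fin (a + b)) ℤ :=
  Matrix.reindex finSumFinEquiv finSumFinEquiv (Matrix.fromBlocks A 0 0 B)

/-- The bilinear form of the lattice with Gram matrix `G` : `x ⋅ y = xᵀ G y`. -/
def bform {n : ℕ} (G : Matrix (Fin n) (Fin n) ℤ) (x y : Fin n → ℤ) : ℤ :=
  x ⬝ᵥ G.mulVec y


/-- `T = ⟨1⟩ ⊕ U ⊕ E8(2)`, an odd lattice of rank 11 and signature (2,9). -/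
def gramT : Matrix (Fin 11) (Fin 11) ℤ := dsum (dsum !![(1 : ℤ)] latU) (2 • latE8)

/-- An isometry of the lattice `(ℤ¹¹, G)`: a ℤ-module automorphism preserving the form. -/
def IsIsometry {n : ℕ} (G : Matrix (Fin n) (Fin n) ℤ)
    (f : (Fin n → ℤ) ≃ₗ[ℤ] (Fin n → ℤ)) : Prop :=
  ∀ x y, bform G (f x) (f y) = bform G x y

section Extension

variable {R M P : Type*} [CommSemiring R] [AddCommMonoid M] [Module R M]
  [AddCommMonoid P] [Module R P]

lemma exists_linearEquiv_comp_eq_of_map_range_eq {j : M →ₗ[R] P} (hj : Function.Injective j)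
    {g : P ≃ₗ[R] P} (hg : j.range.map (g : P →ₗ[R] P) = j.range) :
    ∃ f : M ≃ₗ[R] M, ∀ x, j (f x) = g (j x) := by
  let e : M ≃ₗ[R] j.range := LinearEquiv.ofInjective j hj
  refine ⟨e ≪≫ₗ g.ofSubmodules _ _ hg ≪≫ₗ e.symm, fun x => ?_⟩
  have he : ∀ y, j (e.symm y) = y := fun y => congrArg Subtype.val (e.apply_symm_apply y)
  simp only [LinearEquiv.trans_apply, he]
  rfl

/-- Multiplication by `k`, as a map from `M` to a submodule `N` containing `kM`. -/
def smulInto (k : R) {N : Submodule R M} (hk : ∀ x, k • x ∈ N) : M →ₗ[R] N :=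
  (LinearMap.lsmul R M k).codRestrict N hk

lemma existsUnique_isometry_extension {B : LinearMap.BilinForm R M} {N : Submodule R M} {k : R}
    (hkR : IsSMulRegular R k) (hkM : IsSMulRegular M k) (hk : ∀ x, k • x ∈ N) {g : N ≃ₗ[R] N}
    (hg : ∀ x y : N, B (g x) (g y) = B x y)
    (hrange : (smulInto k hk).range.map (g : N →ₗ[R] N) = (smulInto k hk).range) :
    ∃! f : {f : M ≃ₗ[R] M // ∀ x y, B (f x) (f y) = B x y},
      ∀ x : N, (f : M ≃ₗ[R] M) x = (g x : M) := by
  have hinj : Function.Injective (smulInto k hk) := fun x y h => hkM (congrArg Subtype.val h)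
  obtain ⟨f, hf⟩ := exists_linearEquiv_comp_eq_of_map_range_eq hinj hrange
  have smul_f (x : M) : k • f x = g (smulInto k hk x) := congrArg Subtype.val (hf x)
  have f_isometry (x y : M) : B (f x) (f y) = B x y := by
    refine hkR (hkR ?_)
    calc k • k • B (f x) (f y) = B (k • f x) (k • f y) := by simp
      _ = B (k • x) (k • y) := by rw [smul_f, smul_f, hg]; rfl
      _ = k • k • B x y := by simp
  refine ⟨⟨f, f_isometry⟩, fun x => hkM ?_,
    fun f' hf' => Subtype.ext (LinearEquiv.ext fun x => hkM ?_)⟩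
  · have smulInto_coe : smulInto k hk x = k • x := rfl
    simp only [smul_f, smulInto_coe, map_smul, Submodule.coe_smul]
  · calc k • f'.1 x = f'.1 (smulInto k hk x) := (map_smul f'.1 k x).symm
      _ = k • f x := by rw [hf', smul_f]

end Extension

section DivisibleVectors

variable {R P : Type*} [CommSemiring R] [AddCommMonoid P] [Module R P]

/-- The vectors of `P` whose products with all of `P` are divisible by `m`; for a nondegenerate
lattice `P` with dual `P^∨` this is `P ∩ m P^∨`. -/
def divisibleVectors (B : LinearMap.BilinForm R P) (m : R) : Submodule R P where
  carrier := {w | ∀ y, m ∣ B w y}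
  zero_mem' y := by simp
  add_mem' hv hw y := by simpa using dvd_add (hv y) (hw y)
  smul_mem' a w hw y := by simpa using (hw y).mul_left a

lemma map_divisibleVectors {B : LinearMap.BilinForm R P} {g : P ≃ₗ[R] P}
    (hg : ∀ x y, B (g x) (g y) = B x y) (m : R) :
    (divisibleVectors B m).map (g : P →ₗ[R] P) = divisibleVectors B m := by
  ext w
  obtain ⟨v, rfl⟩ := g.surjective w
  have apply_mem_iff : g v ∈ divisibleVectors B m ↔ v ∈ divisibleVectors B m :=
    g.surjective.forall.trans (forall_congr' fun y => by rw [hg])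
  simpa using apply_mem_iff.symm

end DivisibleVectors

section EvenSublattice

open scoped Pointwise

variable {M : Type*} [AddCommGroup M] {B : LinearMap.BilinForm ℤ M}

/-- The lattice `(M, B)` is 2-elementary: it is nondegenerate and its discriminant group is
killed by 2. In terms of the dual module `M^∨` of functionals, this says that `B : M → M^∨` is
injective with image containing `2 M^∨`. -/
structure IsTwoElementary (B : LinearMap.BilinForm ℤ M) : Prop where
  injective : Function.Injective B
  two_smul_mem_range : ∀ φ : Module.Dual ℤ M, (2 : ℤ) • φ ∈ B.range

/-- `c` is a characteristic vector of the lattice `(M, B)`: norms and products with `c` have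
the same parity. -/
def IsCharacteristic (B : LinearMap.BilinForm ℤ M) (c : M) : Prop :=
  ∀ x, Even (B x x) ↔ Even (B c x)

lemma isCharacteristic_of_span_eq_top (hB : B.IsSymm) {c : M} {s : Set M}
    (hs : Submodule.span ℤ s = ⊤) (h : ∀ x ∈ s, Even (B x x) ↔ Even (B c x)) :
    IsCharacteristic B c := by
  intro x
  induction (hs ▸ Submodule.mem_top : x ∈ Submodule.span ℤ s) using Submodule.span_induction with
  | mem x hx => exact h x hx
  | zero => simp
  | add x y _ _ hx hy =>
    have norm_add : B (x + y) (x + y) = B x x + B y y + 2 * B x y := by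
      simp only [map_add, LinearMap.add_apply, hB.eq y x]
      ring
    rw [norm_add, map_add]
    simp [Int.even_add, hx, hy]
  | smul a x _ hx => simp [Int.even_mul, hx]

lemma IsTwoElementary.isSMulRegular_two (hB : IsTwoElementary B) :
    IsSMulRegular M (2 : ℤ) := by
  refine fun x y h => hB.injective (LinearMap.ext fun z => ?_)
  have two_mul_eq : 2 * B x z = 2 * B y z := by simpa using congrArg (B · z) h
  lia

lemma exists_eq_smul_of_forall_dvd {φ : Module.Dual ℤ M} {m : ℤ} (h : ∀ x, m ∣ φ x) :
    ∃ ψ : Module.Dual ℤ M, φ = m • ψ := by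
  refine ⟨AddMonoidHom.toIntLinearMap ⟨⟨fun x => φ x / m, by simp⟩, fun x y => ?_⟩,
    LinearMap.ext fun x => (Int.mul_ediv_cancel' (h x)).symm⟩
  simp only [map_add, Int.add_ediv_of_dvd_left (h x)]

lemma IsTwoElementary.exists_eq_two_smul_of_forall_dvd (hB : IsTwoElementary B) {w : M}
    (hw : ∀ y, 4 ∣ B w y) : ∃ z, w = (2 : ℤ) • z := by
  obtain ⟨φ, hφ⟩ := exists_eq_smul_of_forall_dvd hw
  obtain ⟨z, hz⟩ := hB.two_smul_mem_range φ
  refine ⟨z, hB.injective ?_⟩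
  rw [hφ, map_smul, hz, smul_smul]
  rfl

variable {c : M} {S : Submodule ℤ M}

lemma IsTwoElementary.exists_eq_two_smul_of_forall_even_dvd (hB : IsTwoElementary B)
    (hc : Odd (B c c)) {w : M} (hw : ∀ y, Even (B c y) → 4 ∣ B w y) :
    ∃ z, w = (2 : ℤ) • z := by
  obtain ⟨k, hk⟩ : 2 ∣ B w c := by
    have four_dvd := hw ((2 : ℤ) • c) (by simp)
    simp only [map_smul, smul_eq_mul] at four_dvd
    lia
  have projection (y : M) : B (w - B w c • c) y = B w (y - B c y • c) := by
    simp only [map_sub, map_smul, LinearMap.sub_apply, LinearMap.smul_apply, smul_eq_mul]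
    ring
  obtain ⟨z, hz⟩ := hB.exists_eq_two_smul_of_forall_dvd (w := w - B w c • c) fun y => by
    rw [projection]
    exact hw _ (by simp [Int.even_sub, Int.even_mul, Int.not_even_iff_odd.2 hc])
  exact ⟨z + k • c, by rw [smul_add, ← hz, smul_smul, ← hk, sub_add_cancel]⟩

lemma IsTwoElementary.range_smulInto_two (hB : IsTwoElementary B) (hc : Odd (B c c))
    (hS : ∀ x, x ∈ S ↔ Even (B c x)) (h2 : ∀ x, (2 : ℤ) • x ∈ S) :
    (smulInto 2 h2).range = (2 : ℤ) • (⊤ : Submodule ℤ S) ⊔ divisibleVectors (B.restrict S) 4 := by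
  apply le_antisymm
  · rintro _ ⟨x, rfl⟩
    have hx : x - B c x • c ∈ S := by
      simp [hS, Int.even_sub, Int.even_mul, Int.not_even_iff_odd.2 hc]
    have h2c : smulInto 2 h2 c ∈ divisibleVectors (B.restrict S) 4 := fun y => by
      obtain ⟨a, ha⟩ := (hS y).1 y.2
      refine ⟨a, ?_⟩
      calc B ((2 : ℤ) • c) y = 2 * B c y := by simp
        _ = 4 * a := by rw [ha]; ring
    refine Submodule.mem_sup.2 ⟨(2 : ℤ) • ⟨_, hx⟩, Submodule.smul_mem_pointwise_smul _ _ _ trivial,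
      B c x • smulInto 2 h2 c, Submodule.smul_mem _ _ h2c, Subtype.ext ?_⟩
    change (2 : ℤ) • (x - B c x • c) + B c x • (2 : ℤ) • c = (2 : ℤ) • x
    module
  · refine sup_le ?_ fun w hw => ?_
    · rintro _ ⟨y, -, rfl⟩
      exact ⟨y, rfl⟩
    · obtain ⟨z, hz⟩ := hB.exists_eq_two_smul_of_forall_even_dvd hc (w := w)
        fun y hy => hw ⟨y, (hS y).2 hy⟩
      exact ⟨z, Subtype.ext hz.symm⟩

theorem isometries_restrict_even_sublattice_general (hB : IsTwoElementary B)
    (hchar : IsCharacteristic B c) (hc : Odd (B c c)) (hS : ∀ x, x ∈ S ↔ Even (B x x)) :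
    (∀ f : M ≃ₗ[ℤ] M, (∀ x y, B (f x) (f y) = B x y) → ∀ x, f x ∈ S ↔ x ∈ S) ∧
    (∀ g : S ≃ₗ[ℤ] S, (∀ x y : S, B (g x) (g y) = B x y) →
      ∃! f : {f : M ≃ₗ[ℤ] M // ∀ x y, B (f x) (f y) = B x y},
        ∀ x : S, (f : M ≃ₗ[ℤ] M) x = (g x : M)) := by
  refine ⟨fun f hf x => by rw [hS, hS, hf], fun g hg => ?_⟩
  have h2 (x : M) : (2 : ℤ) • x ∈ S := by simp [hS]
  refine existsUnique_isometry_extension (IsSMulRegular.of_ne_zero two_ne_zero)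
    hB.isSMulRegular_two h2 hg ?_
  rw [hB.range_smulInto_two hc (fun x => (hS x).trans (hchar x)), Submodule.map_sup,
    Submodule.map_pointwise_smul, Submodule.map_top, LinearEquiv.range,
    map_divisibleVectors (B := B.restrict S) hg]

end EvenSublattice

section GramMatrix

/-- The form `bform G` bundled as a bilinear form, to which results on abstract lattices apply. -/
def gramBilin {n : ℕ} (G : Matrix (Fin n) (Fin n) ℤ) : LinearMap.BilinForm ℤ (Fin n → ℤ) :=
  (dotProductBilin ℤ ℤ).compl₂ G.mulVecLin

variable {n : ℕ} {G : Matrix (Fin n) (Fin n) ℤ}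

lemma gramBilin_apply (x y : Fin n → ℤ) : gramBilin G x y = x ᵥ* G ⬝ᵥ y :=
  dotProduct_mulVec x G y

lemma gramBilin_single_right (x : Fin n → ℤ) (i : Fin n) :
    gramBilin G x (Pi.single i 1) = (x ᵥ* G) i := by
  simp [gramBilin_apply]

lemma gramBilin_single_single (i j : Fin n) :
    gramBilin G (Pi.single i 1) (Pi.single j 1) = G i j := by
  simp [gramBilin_apply]

lemma isSymm_gramBilin (hG : G.IsSymm) : (gramBilin G).IsSymm where
  eq x y := by
    calc gramBilin G x y = y ⬝ᵥ Gᵀ *ᵥ x := by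
          rw [gramBilin_apply, mulVec_transpose, dotProduct_comm]
      _ = gramBilin G y x := by rw [hG]; rfl

lemma isTwoElementary_gramBilin_of_mul_eq {H : Matrix (Fin n) (Fin n) ℤ}
    (hHG : H * G = 2 • 1) : IsTwoElementary (gramBilin G) where
  injective := by
    have hdet : H.det * G.det ≠ 0 := by
      rw [← det_mul, hHG, ← Nat.cast_smul_eq_nsmul ℤ, det_smul, det_one]
      simp
    refine (injective_iff_map_eq_zero _).2 fun x hx =>
      eq_zero_of_vecMul_eq_zero (right_ne_zero_of_mul hdet) ?_
    ext i
    rw [← gramBilin_single_right, hx]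
    rfl
  two_smul_mem_range φ := by
    refine ⟨(fun i => φ (Pi.single i 1)) ᵥ* H, LinearMap.pi_ext' fun i => LinearMap.ext_ring ?_⟩
    simp [gramBilin_apply, vecMul_vecMul, hHG, mul_comm]

lemma isCharacteristic_gramBilin_single (hG : G.IsSymm) {k : Fin n}
    (h : ∀ i, Even (G i i) ↔ Even (G k i)) :
    IsCharacteristic (gramBilin G) (Pi.single k 1) := by
  refine isCharacteristic_of_span_eq_top (isSymm_gramBilin hG) (Pi.basisFun ℤ (Fin n)).span_eq ?_
  rintro _ ⟨i, rfl⟩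
  simpa only [Pi.basisFun_apply, gramBilin_single_single] using h i

lemma dsum_mul_dsum {a b : ℕ} (A A' : Matrix (Fin a) (Fin a) ℤ) (B B' : Matrix (Fin b) (Fin b) ℤ) :
    dsum A B * dsum A' B' = dsum (A * A') (B * B') := by
  simp [dsum, fromBlocks_multiply, submatrix_mul_equiv]

lemma dsum_one {a b : ℕ} :
    dsum (1 : Matrix (Fin a) (Fin a) ℤ) (1 : Matrix (Fin b) (Fin b) ℤ) = 1 := by
  simp [dsum]

lemma smul_dsum {a b : ℕ} (k : ℕ) (A : Matrix (Fin a) (Fin a) ℤ) (B : Matrix (Fin b) (Fin b) ℤ) :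
    k • dsum A B = dsum (k • A) (k • B) := by
  have blocks := fromBlocks_smul k A 0 0 B
  rw [smul_zero, smul_zero] at blocks
  rw [dsum, dsum, ← blocks]
  rfl

end GramMatrix

/-- The inverse of the Gram matrix `latE8`. -/
def latE8Inv : Matrix (Fin 8) (Fin 8) ℤ :=
  !![ -4,  -5,  -7, -10,  -8,  -6,  -4,  -2;
      -5,  -8, -10, -15, -12,  -9,  -6,  -3;
      -7, -10, -14, -20, -16, -12,  -8,  -4;
     -10, -15, -20, -30, -24, -18, -12,  -6;
      -8, -12, -16, -24, -20, -15, -10,  -5;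
      -6,  -9, -12, -18, -15, -12,  -8,  -4;
      -4,  -6,  -8, -12, -10,  -8,  -6,  -3;
      -2,  -3,  -4,  -6,  -5,  -4,  -3,  -2]

lemma latE8Inv_mul_latE8 : latE8Inv * latE8 = 1 := by decide

lemma latU_mul_latU : latU * latU = 1 := by decide

lemma isTwoElementary_gramT : IsTwoElementary (gramBilin gramT) := by
  refine isTwoElementary_gramBilin_of_mul_eq (H := dsum (dsum (2 • 1) (2 • latU)) latE8Inv) ?_
  have one_eq : (!![1] : Matrix (Fin 1) (Fin 1) ℤ) = 1 := by decide
  rw [gramT, dsum_mul_dsum, dsum_mul_dsum, one_eq, smul_mul_assoc, smul_mul_assoc, mul_smul_comm,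
    latU_mul_latU, latE8Inv_mul_latE8, mul_one, ← smul_dsum, ← smul_dsum, dsum_one, dsum_one]

lemma isSymm_gramT : gramT.IsSymm := by
  unfold Matrix.IsSymm
  decide

lemma isCharacteristic_gramT : IsCharacteristic (gramBilin gramT) (Pi.single 0 1) :=
  isCharacteristic_gramBilin_single isSymm_gramT (by decide)

lemma odd_norm_single_gramT : Odd (gramBilin gramT (Pi.single 0 1) (Pi.single 0 1)) := by
  rw [gramBilin_single_single]
  decide

/-- Every isometry of the odd lattice `T = ⟨1⟩ ⊕ U ⊕ E8(2)` maps the even sublattice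
`T₀` onto itself, and restriction `O(T) → O(T₀)` is bijective: every isometry of `T₀`
is the restriction of a unique isometry of `T` (so restriction is a group isomorphism). -/
theorem isometries_restrict_even_sublattice
    (S : Submodule ℤ (Fin 11 → ℤ)) (hS : ∀ x, x ∈ S ↔ Even (bform gramT x x)) :
    (∀ f : (Fin 11 → ℤ) ≃ₗ[ℤ] (Fin 11 → ℤ), IsIsometry gramT f →
      ∀ x, f x ∈ S ↔ x ∈ S) ∧
    (∀ g : S ≃ₗ[ℤ] S, (∀ x y : S, bform gramT (g x) (g y) = bform gramT x y) →
      ∃! f : {f : (Fin 11 → ℤ) ≃ₗ[ℤ] (Fin 11 → ℤ) // IsIsometry gramT f},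
        ∀ x : S, (f : (Fin 11 → ℤ) ≃ₗ[ℤ] (Fin 11 → ℤ)) x = (g x : Fin 11 → ℤ)) :=
  isometries_restrict_even_sublattice_general isTwoElementary_gramT isCharacteristic_gramT
    odd_norm_single_gramT hS
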